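/- Let 1 < β < 2, let U be a finite universe of n ≥ 1 elements and F a finite family of subsets of U. Suppose an assignment asn and levels lev as in the robustness setting satisfy: (1) |cov(s)| ≥ β^{lev(s)} for every s with cov(s) ≠ ∅, and (2) |{e ∈ s : lev(e) < j}| < β^j for every s ∈ F and every natural number j ≤ log_β n, and let C = {s ∈ F : cov(s) ≠ ∅}. Let D ⊆ U with |D| ≤ (β - 1)·|C|, let U' be a universe with U \ D ⊆ U', and let C' ⊆ F be any set cover of U' with |C'| ≤ β·|C|. Then for every set cover C'' ⊆ F of U', |C'| ≤ (β²/(2 - β))·(ln n + 1)·|C''|; that is, C' is a (β²/(2 - β))·(ln n + 1)-approximate set cover of U'. -/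

import Mathlib

/-- If the rank of every element of `s` with respect to `f`, times its weight, is at most `b`, then
the total weight of `s` is at most `b` times the harmonic number of `#s`. -/
theorem sum_le_mul_harmonic_card {α : Type*} [DecidableEq α] (f : α → ℕ) (g : α → ℝ) (b : ℝ)
    (hg : ∀ e, 0 ≤ g e) (s : Finset α)
    (h : ∀ e ∈ s, g e * ((s.filter (fun x => f x ≤ f e)).card : ℝ) ≤ b) :
    ∑ e ∈ s, g e ≤ b * (harmonic s.card : ℝ) := by
  induction s using Finset.induction_on_max_value f with
  | empty => simp
  | insert a s ha hmax ih =>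
    have hsum := ih fun e he => by
      refine le_trans ?_ (h e (Finset.mem_insert_of_mem he))
      refine mul_le_mul_of_nonneg_left ?_ (hg e)
      exact_mod_cast Finset.card_le_card
        (Finset.filter_subset_filter _ (Finset.subset_insert a s))
    have hlast := h a (Finset.mem_insert_self a s)
    rw [Finset.filter_true_of_mem (by
      intro x hx
      rcases Finset.mem_insert.1 hx with rfl | hx
      · exact le_rfl
      · exact hmax x hx), Finset.card_insert_of_notMem ha] at hlast
    rw [Finset.sum_insert ha, Finset.card_insert_of_notMem ha, harmonic_succ]
    push_cast at hlast ⊢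
    have hpos : (0 : ℝ) < s.card + 1 := by positivity
    have hga : g a ≤ b * ((s.card : ℝ) + 1)⁻¹ := by
      rw [← div_eq_mul_inv, le_div_iff₀ hpos]
      exact hlast
    linarith

/-- Charging each element the reciprocal size of its fiber counts the image. -/
theorem sum_inv_card_fiber {α γ : Type*} [DecidableEq γ] (U : Finset α) (f : α → γ) :
    ∑ e ∈ U, ((U.filter (fun x => f x = f e)).card : ℝ)⁻¹ = (U.image f).card := by
  rw [← Finset.sum_fiberwise_of_maps_to (fun e he => Finset.mem_image_of_mem f he),
    Finset.card_eq_sum_ones, Nat.cast_sum]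
  refine Finset.sum_congr rfl fun c hc => ?_
  obtain ⟨e, he, rfl⟩ := Finset.mem_image.1 hc
  have hne : ((U.filter (fun x => f x = f e)).card : ℝ) ≠ 0 :=
    Nat.cast_ne_zero.2 (Finset.card_ne_zero_of_mem (Finset.mem_filter.2 ⟨he, rfl⟩))
  rw [Finset.sum_congr rfl (g := fun _ => ((U.filter (fun x => f x = f e)).card : ℝ)⁻¹)
    (fun x hx => by rw [(Finset.mem_filter.1 hx).2]), Finset.sum_const, nsmul_eq_mul,
    mul_inv_cancel₀ hne, Nat.cast_one]

/-- Union bound for sums of nonnegative weights. -/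
theorem sum_biUnion_le_sum_sum {α ι : Type*} [DecidableEq α] (w : α → ℝ) (hw : ∀ e, 0 ≤ w e)
    (I : Finset ι) (t : ι → Finset α) :
    ∑ e ∈ I.biUnion t, w e ≤ ∑ i ∈ I, ∑ e ∈ t i, w e := by
  classical
  induction I using Finset.induction_on with
  | empty => simp
  | insert i I hi ih =>
    rw [Finset.biUnion_insert, Finset.sum_insert hi]
    have hui := Finset.sum_union_inter (s₁ := t i) (s₂ := I.biUnion t) (f := w)
    have hinter : 0 ≤ ∑ e ∈ t i ∩ I.biUnion t, w e := Finset.sum_nonneg fun e _ => hw e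
    linarith

/-- approximation guarantee of the "robust" algorithm, Claim 5 of the
paper. Let `1 < β < 2`, `U` a finite universe of `n ≥ 1` elements and `F` a finite family
of subsets of `U`, with an assignment `asn`, covers `cov s = {e ∈ U : asn e = s}`, and
levels `lev s ∈ [0, ⌈log_β n⌉]` for sets with nonempty `cov` (elements inheriting
`lev e = lev (asn e)`), satisfying
(1) `|cov s| ≥ β ^ lev s` for every `s` with `cov s ≠ ∅`, and
(2) `|{e ∈ s : lev e < j}| < β ^ j` for every `s ∈ F` and natural `j ≤ log_β n`;
let `C = {s ∈ F : cov s ≠ ∅}`. Let `D ⊆ U` with `|D| ≤ (β - 1)·|C|`, let `U'` be a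
universe containing `U \ D`, and let `C' ⊆ F` be any set cover of `U'` with
`|C'| ≤ β·|C|`. Then for every set cover `C'' ⊆ F` of `U'` we have
`|C'| ≤ (β²/(2 - β))·(ln n + 1)·|C''|`, i.e. `C'` is a
`(β²/(2 - β))·(ln n + 1)`-approximate set cover of `U'`. -/
theorem stmt_6 {α : Type*} [DecidableEq α] (β : ℝ) (hβ : 1 < β) (hβ2 : β < 2)
    (U : Finset α) (F : Finset (Finset α)) (hn : 1 ≤ U.card)
    (hF : ∀ s ∈ F, s ⊆ U)
    (asn : α → Finset α)
    (hasn_mem : ∀ e ∈ U, asn e ∈ F) (hasn_in : ∀ e ∈ U, e ∈ asn e)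
    (lev : Finset α → ℕ)
    (hlev_ub : ∀ s ∈ F, (U.filter (fun e => asn e = s)).Nonempty →
      lev s ≤ ⌈Real.logb β (U.card : ℝ)⌉₊)
    (h1 : ∀ s ∈ F, (U.filter (fun e => asn e = s)).Nonempty →
      β ^ (lev s) ≤ ((U.filter (fun e => asn e = s)).card : ℝ))
    (h2 : ∀ s ∈ F, ∀ j : ℕ, (j : ℝ) ≤ Real.logb β (U.card : ℝ) →
      ((s.filter (fun e => lev (asn e) < j)).card : ℝ) < β ^ j)
    (C : Finset (Finset α))
    (hC : C = F.filter (fun s => (U.filter (fun e => asn e = s)).Nonempty))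
    (D : Finset α) (hDsub : D ⊆ U) (hDcard : (D.card : ℝ) ≤ (β - 1) * C.card)
    (U' : Finset α) (hU' : U \ D ⊆ U')
    (C' : Finset (Finset α)) (hC'sub : C' ⊆ F)
    (hC'cover : ∀ e ∈ U', ∃ s ∈ C', e ∈ s)
    (hC'size : (C'.card : ℝ) ≤ β * C.card) :
    ∀ C'' : Finset (Finset α), C'' ⊆ F → (∀ e ∈ U', ∃ s ∈ C'', e ∈ s) →
      (C'.card : ℝ) ≤ (β ^ 2 / (2 - β)) * (Real.log (U.card : ℝ) + 1) * C''.card := by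
  intro C'' hC''sub hC''cover
  have hβ0 : 0 < β := by linarith
  have hn0 : (0 : ℝ) < U.card := by exact_mod_cast hn
  let w : α → ℝ := fun e => ((U.filter (fun x => asn x = asn e)).card : ℝ)⁻¹
  have hw0 : ∀ e, 0 ≤ w e := fun e => by positivity
  have hfiber : ∀ e ∈ U, (U.filter (fun x => asn x = asn e)).Nonempty := fun e he =>
    ⟨e, Finset.mem_filter.2 ⟨he, rfl⟩⟩
  have hw1 : ∀ e ∈ U, w e ≤ 1 := fun e he =>
    inv_le_one_of_one_le₀ (by exact_mod_cast (hfiber e he).card_pos)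
  have hwlev : ∀ e ∈ U, w e ≤ (β ^ lev (asn e))⁻¹ := fun e he =>
    inv_anti₀ (by positivity) (h1 _ (hasn_mem e he) (hfiber e he))
  have hCimage : C = U.image asn := by
    rw [hC]
    ext s
    simp only [Finset.mem_filter, Finset.mem_image]
    constructor
    · rintro ⟨-, e, he⟩
      exact ⟨e, Finset.mem_filter.1 he⟩
    · rintro ⟨e, he, rfl⟩
      exact ⟨hasn_mem e he, hfiber e he⟩
  have hUsum : ∑ e ∈ U, w e = C.card := by rw [hCimage]; exact sum_inv_card_fiber U asn
  have hcount : ∀ s ∈ F, ∀ j : ℕ,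
      ((s.filter (fun e => lev (asn e) < j)).card : ℝ) ≤ β ^ j := by
    intro s hs j
    rcases le_or_gt (j : ℝ) (Real.logb β U.card) with hj | hj
    · exact (h2 s hs j hj).le
    · have hlt := (Real.logb_lt_iff_lt_rpow hβ hn0).1 hj
      rw [Real.rpow_natCast] at hlt
      refine le_trans ?_ hlt.le
      exact_mod_cast Finset.card_le_card ((Finset.filter_subset _ _).trans (hF s hs))
  have hset : ∀ s ∈ F, ∑ e ∈ s, w e ≤ β * (Real.log U.card + 1) := by
    intro s hs
    have hharm := sum_le_mul_harmonic_card (fun e => lev (asn e)) w β hw0 s fun e he => by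
      have hc := hcount s hs (lev (asn e) + 1)
      simp only [Nat.lt_succ_iff] at hc
      calc _ ≤ (β ^ lev (asn e))⁻¹ * β ^ (lev (asn e) + 1) :=
            mul_le_mul (hwlev e (hF s hs he)) hc (by positivity) (by positivity)
        _ = β := by rw [pow_succ]; field_simp
    refine hharm.trans (mul_le_mul_of_nonneg_left ?_ hβ0.le)
    rcases s.eq_empty_or_nonempty with rfl | hne
    · have := Real.log_nonneg (x := (U.card : ℝ)) (by exact_mod_cast hn)
      simp only [Finset.card_empty, harmonic_zero, Rat.cast_zero]
      linarith
    · have hcard : (s.card : ℝ) ≤ U.card := by exact_mod_cast Finset.card_le_card (hF s hs)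
      have hlog := Real.log_le_log (by exact_mod_cast hne.card_pos) hcard
      linarith [harmonic_le_one_add_log s.card]
  have hDsum : ∑ e ∈ D, w e ≤ D.card := by
    simpa using Finset.sum_le_card_nsmul D w 1 fun e he => hw1 e (hDsub he)
  have hsplit := Finset.sum_sdiff (f := w) hDsub
  have hcover : ∑ e ∈ U \ D, w e ≤ C''.card * (β * (Real.log U.card + 1)) := by
    calc ∑ e ∈ U \ D, w e ≤ ∑ e ∈ C''.biUnion id, w e :=
          Finset.sum_le_sum_of_subset_of_nonneg
            (fun e he => Finset.mem_biUnion.2 (hC''cover e (hU' he))) fun e _ _ => hw0 e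
      _ ≤ ∑ s ∈ C'', ∑ e ∈ s, w e := sum_biUnion_le_sum_sum w hw0 C'' id
      _ ≤ _ := by
          simpa using Finset.sum_le_card_nsmul C'' _ _ fun s hs => hset s (hC''sub hs)
  have hCbound : (2 - β) * C.card ≤ C''.card * (β * (Real.log U.card + 1)) := by linarith
  have h2β : 0 < 2 - β := by linarith
  calc (C'.card : ℝ) ≤ β * C.card := hC'size
    _ ≤ β * (C''.card * (β * (Real.log U.card + 1)) / (2 - β)) := by
        gcongr
        rw [le_div_iff₀ h2β]
        linarith
    _ = _ := by ring
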